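/- Let k ≥ 1 be an integer, and for real numbers μ, λ let c(μ, λ) denote the unique real number such that for some reals a₁, …, a_k the function h(r) = 1 + Σ_{l=1}^{k} a_l r^{2l} + c(μ,λ) r^{2k+2} log r satisfies μ r² h(r) − (1 − λr²/2)²(r d/dr)² h(r) + 2(k+1)(1 − λ²r⁴/4)(r d/dr) h(r) = O(r^{2k+3} log r) as r → 0⁺. Then for every real t ≠ 0 and all μ, λ one has c(tμ, tλ) = t^{k+1} c(μ, λ). -/

import Mathlib

open Real Filter Asymptotics

/-- The operator `r d/dr`. -/
noncomputable def rDeriv (h : ℝ → ℝ) : ℝ → ℝ := fun r => r * deriv h r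

/-- The scalar reduction of the Jacobi operator `J⁺` along an eigendirection with
eigenvalue `μ`:
`(ℒh)(r) = μ r² h(r) − (1 − λr²/2)² (r d/dr)² h(r) + 2(k+1)(1 − λ²r⁴/4)(r d/dr) h(r)`. -/
noncomputable def scalarJacobiOp (k : ℕ) (μ lam : ℝ) (h : ℝ → ℝ) : ℝ → ℝ := fun r =>
  μ * r ^ 2 * h r - (1 - lam * r ^ 2 / 2) ^ 2 * rDeriv (rDeriv h) r
    + 2 * ((k : ℝ) + 1) * (1 - lam ^ 2 * r ^ 4 / 4) * rDeriv h r

/-- The ansatz `h(r) = 1 + Σ_{l=1}^{k} a_l r^{2l} + c r^{2k+2} log r`. -/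
noncomputable def ansatz (k : ℕ) (a : Fin k → ℝ) (c : ℝ) : ℝ → ℝ := fun r =>
  1 + ∑ l : Fin k, a l * r ^ (2 * ((l : ℕ) + 1)) + c * r ^ (2 * k + 2) * Real.log r

/-!
In the variable `X = r²` the operator `r d/dr` becomes `θ = 2 X d/dX`, and a function
`P(r²) + Q(r²) log r` is sent by the Jacobi operator to `(L P + L' Q)(r²) + (L Q)(r²) log r`, where
`L'` is the derivative of the symbol `L` with respect to `θ`. Modulo `X^(k+2)`, the asymptotic
equation for the ansatz with polynomial part `B` thus says `L B = 2 (k+1) c X^(k+1)`.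

The lowest-order term of `L X^n` is `4 n (k+1-n) X^n`. Its coefficient is nonzero for `1 ≤ n ≤ k`,
so `B` is determined up to order `k`, and it vanishes for `n = k+1`, so `c` is determined as well.
Substituting `t X` for `X` carries `L` for `(μ, λ)` to `L` for `(t μ, t λ)`, hence a solution
`(B, c)` to the solution `(B(t X), t^(k+1) c)`. In terms of `r` this would be
a rescaling by `√t`, which makes no sense for `t < 0` and shifts `log r` by a constant.
-/

open Polynomial Topology

section EulerOperator

variable {R : Type*} [CommSemiring R]

/-- The Euler operator `r d/dr` in the variable `X = r²`. -/
noncomputable def eulerSq : R[X] →ₗ[R] R[X] :=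
  LinearMap.mulLeft R (2 * X) ∘ₗ derivative

lemma eulerSq_apply (P : R[X]) : eulerSq P = 2 * X * derivative P := rfl

lemma eval_zero_eulerSq (P : R[X]) : (eulerSq P).eval 0 = 0 := by
  simp [eulerSq_apply]

lemma eulerSq_X_pow_mul (n : ℕ) (P : R[X]) :
    eulerSq (X ^ n * P) = X ^ n * (C (2 * (n : R)) * P + eulerSq P) := by
  cases n with
  | zero => simp
  | succ n =>
    simp only [eulerSq_apply, derivative_mul, derivative_X_pow, C_mul, C_ofNat, C_eq_natCast,
      Nat.add_sub_cancel]
    ring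

lemma eulerSq_C_mul_X_pow (c : R) (n : ℕ) :
    eulerSq (C c * X ^ n) = C (2 * (n : R)) * (C c * X ^ n) := by
  rw [mul_comm (C c), eulerSq_X_pow_mul]
  simp only [eulerSq_apply, derivative_C]
  ring

lemma eulerSq_comp_C_mul_X (t : R) (P : R[X]) :
    eulerSq (P.comp (C t * X)) = (eulerSq P).comp (C t * X) := by
  simp only [eulerSq_apply, derivative_comp, derivative_C_mul, derivative_X, mul_comp, X_comp,
    ofNat_comp, mul_one]
  ring

end EulerOperator

section FormalSolutions

variable {K : Type*} [Field K]

/-- The scalar Jacobi operator in the variable `X = r²`, acting on polynomials. -/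
noncomputable def polyJacobiOp (k : ℕ) (μ lam : K) : K[X] →ₗ[K] K[X] :=
  LinearMap.mulLeft K (C μ * X)
    - LinearMap.mulLeft K ((1 - C (lam / 2) * X) ^ 2) ∘ₗ eulerSq ∘ₗ eulerSq
    + LinearMap.mulLeft K (C (2 * ((k : K) + 1)) * (1 - C (lam / 2) ^ 2 * X ^ 2)) ∘ₗ eulerSq

lemma polyJacobiOp_apply (k : ℕ) (μ lam : K) (P : K[X]) :
    polyJacobiOp k μ lam P = C μ * X * P - (1 - C (lam / 2) * X) ^ 2 * eulerSq (eulerSq P)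
      + C (2 * ((k : K) + 1)) * (1 - C (lam / 2) ^ 2 * X ^ 2) * eulerSq P := rfl

lemma polyJacobiOp_comp_C_mul_X (k : ℕ) (μ lam t : K) (P : K[X]) :
    polyJacobiOp k (t * μ) (t * lam) (P.comp (C t * X))
      = (polyJacobiOp k μ lam P).comp (C t * X) := by
  simp only [polyJacobiOp_apply, eulerSq_comp_C_mul_X, add_comp, sub_comp, mul_comp, pow_comp,
    C_comp, X_comp, one_comp, mul_div_assoc, C_mul]
  ring

lemma coeff_polyJacobiOp_of_X_pow_dvd (k : ℕ) (μ lam : K) {n : ℕ} {P : K[X]} (hP : X ^ n ∣ P) :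
    (polyJacobiOp k μ lam P).coeff n = 4 * n * (k + 1 - n) * P.coeff n := by
  obtain ⟨R, rfl⟩ := hP
  have hfactor : polyJacobiOp k μ lam (X ^ n * R) = X ^ n *
      (C μ * X * R
        - (1 - C (lam / 2) * X) ^ 2 *
          (C (2 * (n : K)) * (C (2 * (n : K)) * R + eulerSq R)
            + eulerSq (C (2 * (n : K)) * R + eulerSq R))
        + C (2 * ((k : K) + 1)) * (1 - C (lam / 2) ^ 2 * X ^ 2) *
          (C (2 * (n : K)) * R + eulerSq R)) := by
    simp only [polyJacobiOp_apply, eulerSq_X_pow_mul]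
    ring
  rw [hfactor, coeff_X_pow_mul', coeff_X_pow_mul', if_pos le_rfl, if_pos le_rfl, Nat.sub_self,
    coeff_zero_eq_eval_zero, coeff_zero_eq_eval_zero]
  simp only [eval_add, eval_sub, eval_mul, eval_pow, eval_C, eval_X, eval_one, eval_zero_eulerSq]
  ring

lemma X_pow_dvd_polyJacobiOp_C_mul_X_pow (k : ℕ) (μ lam c : K) :
    X ^ (k + 2) ∣ polyJacobiOp k μ lam (C c * X ^ (k + 1)) := by
  refine X_pow_dvd_iff.2 fun n hn => ?_
  have hdvd : (X : K[X]) ^ n ∣ C c * X ^ (k + 1) :=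
    (pow_dvd_pow X (by omega)).mul_left _
  rw [coeff_polyJacobiOp_of_X_pow_dvd k μ lam hdvd, coeff_C_mul_X_pow]
  split_ifs with h
  · simp [h]
  · simp

/-- The derivative of `polyJacobiOp`, as a polynomial in `θ = eulerSq`, with respect to `θ`. It
arises from `θ (Q log r) = (θ Q) log r + Q`. -/
noncomputable def polyJacobiOpDeriv (k : ℕ) (lam : K) (Q : K[X]) : K[X] :=
  C (2 * ((k : K) + 1)) * (1 - C (lam / 2) ^ 2 * X ^ 2) * Q
    - 2 * (1 - C (lam / 2) * X) ^ 2 * eulerSq Q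

lemma X_pow_dvd_polyJacobiOpDeriv_add (k : ℕ) (lam c : K) :
    X ^ (k + 2) ∣ polyJacobiOpDeriv k lam (C c * X ^ (k + 1))
      + C (2 * ((k : K) + 1) * c) * X ^ (k + 1) := by
  refine ⟨C (2 * ((k : K) + 1) * c) * (4 * C (lam / 2) - 3 * C (lam / 2) ^ 2 * X), ?_⟩
  simp only [polyJacobiOpDeriv, eulerSq_C_mul_X_pow, Nat.cast_succ, C_mul]
  ring

/-- `B` solves the Jacobi equation to order `X^(k+1)`, with log-coefficient `c`: the term
`c r^(2k+2) log r` of the ansatz contributes `-2(k+1) c X^(k+1)` to the log-free part. No bound is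
put on the degree of `B`, whose coefficients of order above `k` do not affect `c`. -/
structure IsFormalSolution (k : ℕ) (μ lam : K) (B : K[X]) (c : K) : Prop where
  coeff_zero : B.coeff 0 = 1
  X_pow_dvd : X ^ (k + 2) ∣ polyJacobiOp k μ lam B - C (2 * ((k : K) + 1) * c) * X ^ (k + 1)

namespace IsFormalSolution

variable {k : ℕ} {μ lam c c' : K} {B B' : K[X]}

lemma comp_C_mul_X (h : IsFormalSolution k μ lam B c) (t : K) :
    IsFormalSolution k (t * μ) (t * lam) (B.comp (C t * X)) (t ^ (k + 1) * c) where
  coeff_zero := by simp [h.coeff_zero]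
  X_pow_dvd := by
    have hcomp : (C t * X) ^ (k + 2) ∣
        (polyJacobiOp k μ lam B - C (2 * ((k : K) + 1) * c) * X ^ (k + 1)).comp (C t * X) := by
      simpa using map_dvd (compRingHom (C t * X)) h.X_pow_dvd
    convert (pow_dvd_pow_of_dvd (dvd_mul_left X (C t)) (k + 2)).trans hcomp using 1
    simp only [polyJacobiOp_comp_C_mul_X, sub_comp, mul_comp, C_comp, X_pow_comp, mul_pow, C_mul,
      C_pow]
    ring

lemma X_pow_dvd_polyJacobiOp_sub (h : IsFormalSolution k μ lam B c)
    (h' : IsFormalSolution k μ lam B' c') :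
    X ^ (k + 2) ∣ polyJacobiOp k μ lam (B - B')
      - C (2 * ((k : K) + 1) * (c - c')) * X ^ (k + 1) := by
  convert dvd_sub h.X_pow_dvd h'.X_pow_dvd using 1
  simp only [map_sub, mul_sub]
  ring

lemma coeff_polyJacobiOp_sub (h : IsFormalSolution k μ lam B c)
    (h' : IsFormalSolution k μ lam B' c') {n : ℕ} (hn : n ≤ k + 1) :
    (polyJacobiOp k μ lam (B - B')).coeff n
      = if n = k + 1 then 2 * ((k : K) + 1) * (c - c') else 0 := by
  have hcoeff := X_pow_dvd_iff.1 (h.X_pow_dvd_polyJacobiOp_sub h') n (by omega)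
  rwa [coeff_sub, coeff_C_mul_X_pow, sub_eq_zero] at hcoeff

variable [CharZero K]

lemma X_pow_dvd_sub (h : IsFormalSolution k μ lam B c) (h' : IsFormalSolution k μ lam B' c') :
    ∀ n ≤ k + 1, X ^ n ∣ B - B' := by
  intro n
  induction n with
  | zero => simp
  | succ n ih =>
    intro hn
    have hdvd : X ^ n ∣ B - B' := ih (by omega)
    suffices hcoeff : (B - B').coeff n = 0 by
      refine X_pow_dvd_iff.2 fun m hm => ?_
      obtain hlt | rfl := Nat.lt_succ_iff_lt_or_eq.1 hm
      · exact X_pow_dvd_iff.1 hdvd m hlt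
      · exact hcoeff
    obtain rfl | hpos := Nat.eq_zero_or_pos n
    · simp [h.coeff_zero, h'.coeff_zero]
    have hmul : 4 * (n : K) * (k + 1 - n) * (B - B').coeff n = 0 := by
      rw [← coeff_polyJacobiOp_of_X_pow_dvd k μ lam hdvd,
        h.coeff_polyJacobiOp_sub h' (by omega), if_neg (by omega)]
    have hn_ne : (n : K) ≠ 0 := Nat.cast_ne_zero.2 hpos.ne'
    have hk_ne : (k : K) + 1 - n ≠ 0 := sub_ne_zero.2 (by norm_cast; omega)
    simpa [hn_ne, hk_ne] using hmul

theorem logCoeff_unique (h : IsFormalSolution k μ lam B c) (h' : IsFormalSolution k μ lam B' c') :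
    c = c' := by
  have hcoeff := coeff_polyJacobiOp_of_X_pow_dvd k μ lam (h.X_pow_dvd_sub h' (k + 1) le_rfl)
  rw [h.coeff_polyJacobiOp_sub h' le_rfl, if_pos rfl, Nat.cast_succ, sub_self, mul_zero,
    zero_mul] at hcoeff
  have hk_ne : (k : K) + 1 ≠ 0 := Nat.cast_add_one_ne_zero k
  simpa [hk_ne, sub_eq_zero] using hcoeff

end IsFormalSolution

end FormalSolutions

section PowerAsymptotics

lemma X_pow_succ_dvd_of_eval_isLittleO {α 𝕜 : Type*} [NormedField 𝕜] {l : Filter α} [l.NeBot]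
    {u : α → 𝕜} (hu : Tendsto u l (𝓝[≠] 0)) {P : 𝕜[X]} {m : ℕ}
    (h : (fun x => P.eval (u x)) =o[l] fun x => u x ^ m) : X ^ (m + 1) ∣ P := by
  have hu_zero : Tendsto u l (𝓝 0) := tendsto_nhds_of_tendsto_nhdsWithin hu
  have hu_ne : ∀ᶠ x in l, u x ≠ 0 := hu.eventually self_mem_nhdsWithin
  have hdvd : X ^ m ∣ P := by
    cases m with
    | zero => simp
    | succ m =>
      refine X_pow_succ_dvd_of_eval_isLittleO hu (h.trans_isBigO ?_)
      simpa only [pow_succ, mul_one] using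
        (isBigO_refl (fun x => u x ^ m) l).mul (hu_zero.isBigO_one 𝕜)
  obtain ⟨R, rfl⟩ := hdvd
  have hR_zero : Tendsto (fun x => R.eval (u x)) l (𝓝 0) := by
    refine h.tendsto_div_nhds_zero.congr' ?_
    filter_upwards [hu_ne] with x hx
    rw [eval_mul, eval_pow, eval_X, mul_div_cancel_left₀ _ (pow_ne_zero m hx)]
  have hR_eval : Tendsto (fun x => R.eval (u x)) l (𝓝 (R.eval 0)) :=
    (R.continuous.tendsto 0).comp hu_zero
  rw [pow_succ]
  refine mul_dvd_mul_left _ (X_dvd_iff.2 ?_)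
  rw [coeff_zero_eq_eval_zero, tendsto_nhds_unique hR_eval hR_zero]

lemma pow_mul_log_isLittleO_pow {m n : ℕ} (h : n < m) :
    (fun x : ℝ => x ^ m * log x) =o[𝓝[>] 0] fun x => x ^ n := by
  obtain ⟨j, rfl⟩ := Nat.exists_eq_add_of_lt h
  have hcont : Continuous fun x : ℝ => x ^ j * (x * log x) :=
    (continuous_pow j).mul continuous_mul_log
  have htendsto : Tendsto (fun x : ℝ => x ^ j * (x * log x)) (𝓝[>] 0) (𝓝 0) := by
    simpa using (hcont.tendsto 0).mono_left nhdsWithin_le_nhds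
  refine ((isBigO_refl (fun x : ℝ => x ^ n) (𝓝[>] 0)).mul_isLittleO
    ((isLittleO_one_iff ℝ).2 htendsto)).congr (fun x => ?_) (fun x => mul_one _)
  ring

lemma eval_sq_mul_log_isLittleO_of_X_pow_dvd {m : ℕ} {Q : ℝ[X]} (hQ : X ^ (m + 1) ∣ Q) :
    (fun r => Q.eval (r ^ 2) * log r) =o[𝓝[>] 0] fun r => (r ^ 2) ^ m := by
  obtain ⟨R, rfl⟩ := hQ
  have hR : (fun r : ℝ => R.eval (r ^ 2)) =O[𝓝[>] 0] fun _ => (1 : ℝ) :=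
    (((R.continuous.comp (continuous_pow 2)).tendsto 0).mono_left nhdsWithin_le_nhds).isBigO_one ℝ
  have hlog := pow_mul_log_isLittleO_pow (m := 2 * (m + 1)) (n := 2 * m) (by omega)
  refine (hR.mul_isLittleO hlog).congr (fun r => ?_) (fun r => ?_)
  · simp only [eval_mul, eval_pow, eval_X]
    ring
  · ring

end PowerAsymptotics

section LogExpansions

lemma rDeriv_congr {f g : ℝ → ℝ} {s : Set ℝ} (hs : IsOpen s) (h : Set.EqOn f g s) :
    Set.EqOn (rDeriv f) (rDeriv g) s := fun r hr =>
  congrArg (r * ·) (h.deriv hs hr)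

/-- The function `P(r²) + Q(r²) log r`: the class of functions, stable under `r d/dr`, that contains
the ansatz. -/
noncomputable def evalSqLog (P Q : ℝ[X]) : ℝ → ℝ :=
  fun r => P.eval (r ^ 2) + Q.eval (r ^ 2) * log r

lemma rDeriv_evalSqLog (P Q : ℝ[X]) :
    Set.EqOn (rDeriv (evalSqLog P Q)) (evalSqLog (eulerSq P + Q) (eulerSq Q)) {0}ᶜ := by
  intro r hr
  have hr : r ≠ 0 := hr
  have hsq : HasDerivAt (fun x : ℝ => x ^ 2) (2 * r) r := by
    simpa using hasDerivAt_pow 2 r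
  have hP := (P.hasDerivAt (r ^ 2)).comp r hsq
  have hQ := (Q.hasDerivAt (r ^ 2)).comp r hsq
  have hderiv : HasDerivAt (evalSqLog P Q) _ r := hP.add (hQ.mul (hasDerivAt_log hr))
  simp only [rDeriv, hderiv.deriv, evalSqLog, eulerSq_apply, Function.comp_apply, eval_add,
    eval_mul, eval_ofNat, eval_X]
  field_simp
  ring

lemma scalarJacobiOp_evalSqLog (k : ℕ) (μ lam : ℝ) (P Q : ℝ[X]) :
    Set.EqOn (scalarJacobiOp k μ lam (evalSqLog P Q))
      (evalSqLog (polyJacobiOp k μ lam P + polyJacobiOpDeriv k lam Q) (polyJacobiOp k μ lam Q))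
      {0}ᶜ := by
  intro r hr
  have hderiv := rDeriv_evalSqLog P Q
  have hderiv_two := (rDeriv_congr isOpen_compl_singleton hderiv).trans (rDeriv_evalSqLog _ _)
  simp only [scalarJacobiOp, hderiv hr, hderiv_two hr]
  simp only [evalSqLog, polyJacobiOp_apply, polyJacobiOpDeriv, map_add, eval_add, eval_sub,
    eval_mul, eval_pow, eval_C, eval_X, eval_one, eval_ofNat]
  ring

/-- The log-free part of the ansatz, as a polynomial in `X = r²`. -/
noncomputable def ansatzPoly (k : ℕ) (a : Fin k → ℝ) : ℝ[X] :=
  1 + ∑ l : Fin k, C (a l) * X ^ ((l : ℕ) + 1)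

lemma coeff_zero_ansatzPoly (k : ℕ) (a : Fin k → ℝ) : (ansatzPoly k a).coeff 0 = 1 := by
  simp [ansatzPoly, coeff_zero_eq_eval_zero, eval_finsetSum]

lemma ansatz_eq_evalSqLog (k : ℕ) (a : Fin k → ℝ) (c : ℝ) :
    ansatz k a c = evalSqLog (ansatzPoly k a) (C c * X ^ (k + 1)) := by
  funext r
  simp only [ansatz, evalSqLog, ansatzPoly, eval_add, eval_one, eval_finsetSum, eval_mul, eval_C,
    eval_pow, eval_X, ← pow_mul, mul_add, mul_one]

theorem isFormalSolution_of_isLittleO {k : ℕ} {μ lam c : ℝ} {a : Fin k → ℝ}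
    (h : scalarJacobiOp k μ lam (ansatz k a c) =o[𝓝[>] 0] fun r => r ^ (2 * k + 2)) :
    IsFormalSolution k μ lam (ansatzPoly k a) c where
  coeff_zero := coeff_zero_ansatzPoly k a
  X_pow_dvd := by
    set G : ℝ[X] := C c * X ^ (k + 1) with hG
    have hsq : Tendsto (fun r : ℝ => r ^ 2) (𝓝[>] 0) (𝓝[≠] 0) := by
      refine tendsto_nhdsWithin_iff.2 ⟨?_, ?_⟩
      · simpa using ((continuous_pow 2).tendsto (0 : ℝ)).mono_left nhdsWithin_le_nhds
      · filter_upwards [self_mem_nhdsWithin] with r hr using pow_ne_zero 2 (ne_of_gt hr)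
    have hlog := eval_sq_mul_log_isLittleO_of_X_pow_dvd
      (X_pow_dvd_polyJacobiOp_C_mul_X_pow k μ lam c)
    have hpoly : (fun r => (polyJacobiOp k μ lam (ansatzPoly k a)
        + polyJacobiOpDeriv k lam G).eval (r ^ 2)) =o[𝓝[>] 0] fun r : ℝ => (r ^ 2) ^ (k + 1) := by
      simp only [← pow_mul, mul_add, mul_one] at hlog ⊢
      refine (h.sub hlog).congr' ?_ EventuallyEq.rfl
      filter_upwards [self_mem_nhdsWithin] with r hr
      rw [ansatz_eq_evalSqLog, scalarJacobiOp_evalSqLog k μ lam _ _ (ne_of_gt hr)]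
      exact add_sub_cancel_right _ _
    convert dvd_sub (X_pow_succ_dvd_of_eval_isLittleO hsq hpoly)
      (X_pow_dvd_polyJacobiOpDeriv_add k lam c) using 1
    rw [hG]
    ring

end LogExpansions

theorem log_coefficient_homogeneity_general (k : ℕ) (t μ lam : ℝ) (a a' : Fin k → ℝ) (c c' : ℝ)
    (h : scalarJacobiOp k μ lam (ansatz k a c) =o[𝓝[>] 0] fun r => r ^ (2 * k + 2))
    (h' : scalarJacobiOp k (t * μ) (t * lam) (ansatz k a' c') =o[𝓝[>] 0]
      fun r => r ^ (2 * k + 2)) :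
    c' = t ^ (k + 1) * c :=
  (isFormalSolution_of_isLittleO h').logCoeff_unique
    ((isFormalSolution_of_isLittleO h).comp_C_mul_X t)

/-- Homogeneity of the logarithmic coefficient: if `c` is the log-coefficient of the
asymptotic solution for data `(μ, λ)` and `c'` is that for `(tμ, tλ)` with `t ≠ 0`,
then `c' = t^{k+1} c`. -/
theorem log_coefficient_homogeneity (k : ℕ) (hk : 1 ≤ k) (t : ℝ) (ht : t ≠ 0)
    (μ lam : ℝ) (a a' : Fin k → ℝ) (c c' : ℝ)
    (h : (scalarJacobiOp k μ lam (ansatz k a c)) =O[nhdsWithin 0 (Set.Ioi 0)]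
      (fun r : ℝ => r ^ (2 * k + 3) * Real.log r))
    (h' : (scalarJacobiOp k (t * μ) (t * lam) (ansatz k a' c')) =O[nhdsWithin 0 (Set.Ioi 0)]
      (fun r : ℝ => r ^ (2 * k + 3) * Real.log r)) :
    c' = t ^ (k + 1) * c := by
  have hlog := pow_mul_log_isLittleO_pow (Nat.lt_succ_self (2 * k + 2))
  exact log_coefficient_homogeneity_general k t μ lam a a' c c'
    (h.trans_isLittleO hlog) (h'.trans_isLittleO hlog)
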